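/- arXiv:2505.21989 — 2 statements merged into one kernel-verified Lean document; each statement's English description precedes it below -/
import Mathlib

section
/- For all integers n ≥ 1 such that n = m² for some odd positive integer m, the number of (4,3)-regular overpartitions satisfies R̄_{4,3}(2n) ≡ 4 (mod 8). -/
/-- Number of partitions of `a` with no part divisible by `ℓ` or `μ`
(the non-overlined parts of an `(ℓ,μ)`-regular overpartition). -/
def regularCount (ℓ μ a : ℕ) : ℕ :=
  Fintype.card {p : a.Partition // ∀ i ∈ p.parts, ¬ ℓ ∣ i ∧ ¬ μ ∣ i}

/-- Number of partitions of `a` into distinct parts with no part divisible by `ℓ` or `μ`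
(the overlined parts of an `(ℓ,μ)`-regular overpartition). -/
def regularDistinctCount (ℓ μ a : ℕ) : ℕ :=
  Fintype.card {p : a.Partition // p.parts.Nodup ∧ ∀ i ∈ p.parts, ¬ ℓ ∣ i ∧ ¬ μ ∣ i}

/-- `Rbar ℓ μ n` is the number of `(ℓ,μ)`-regular overpartitions of `n`: pairs `(λ, δ)`
where `λ` is a partition, `δ` is a partition into distinct parts, `|λ| + |δ| = n`,
and no part of `λ` or `δ` is divisible by `ℓ` or by `μ`. -/
def Rbar (ℓ μ n : ℕ) : ℕ :=
  ∑ ab ∈ Finset.HasAntidiagonal.antidiagonal n, regularCount ℓ μ ab.1 * regularDistinctCount ℓ μ ab.2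

/-!
Write `φ(-q) = 1 + 2 ∑ (-1)ˢ q^(s²)`, summed over `s ≥ 1`. By Gauss's identity `1 / φ(-qᵏ)` is the
generating function of the overpartitions into multiples of `k`, so inclusion–exclusion on the parts
gives `∑ R̄_{ℓ,μ}(n) qⁿ = φ(-q^ℓ) φ(-q^μ) / (φ(-q) φ(-q^lcm(ℓ,μ)))`. Expand the right-hand side
modulo `8` as a polynomial in the four series `∑ (-1)ˢ q^(k s²)`. When `4 ∣ ℓ` and
`μ ≡ 0, 3 (mod 4)`, the forms `k a²` and `k a² + l b²` that occur never represent an exponent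
`≡ 2 (mod 4)`, apart from `a² + b²`, which comes from `4 (∑ (-1)ˢ q^(s²))²`. Modulo `2` that square
is `∑ q^(2 s²)`.
-/

open Filter Finset Nat.Partition PowerSeries PowerSeries.WithPiTopology

section FiniteGaussIdentity

variable {R : Type*} [CommRing R] {q : R} {Q : ℕ → R}

-- With `Q s = ∏ (1 + qʲ) / (1 - qʲ)` over `1 ≤ j ≤ s`, this is the truncation of the functional
-- equation of `∑ zˢ Q s = ∏ (1 + z qʲ⁺¹) / (1 - z qʲ)` (product over `j ≥ 0`) under `z ↦ q z`.
theorem one_add_mul_sum_mul_pow_mul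
    (hQ : ∀ s, (1 - q ^ (s + 1)) * Q (s + 1) = (1 + q ^ (s + 1)) * Q s) (z : R) (n : ℕ) :
    (1 + q * z) * ∑ s ∈ range n, (q * z) ^ s * Q s =
      (1 - z) * ∑ s ∈ range n, z ^ s * Q s + (1 - q ^ n) * (z ^ n * Q n) := by
  induction n with
  | zero => simp
  | succ n ih =>
    simp only [sum_range_succ]
    linear_combination ih - z ^ (n + 1) * hQ n

theorem one_add_two_mul_sum_neg_one_pow_mul_pow_sq_mul (hq : ∀ s, IsLeftRegular (1 - q ^ (s + 1)))
    (hQ₀ : Q 0 = 1) (hQ : ∀ s, (1 - q ^ (s + 1)) * Q (s + 1) = (1 + q ^ (s + 1)) * Q s) (n : ℕ) :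
    (1 + 2 * ∑ s ∈ range n, (-1) ^ (s + 1) * q ^ (s + 1) ^ 2) * Q n =
      (1 - q ^ (n + 1)) * ∑ s ∈ range n, (-q ^ (n + 1)) ^ s * Q s + (-q ^ (n + 1)) ^ n * Q n := by
  induction n with
  | zero => simp [hQ₀]
  | succ n ih =>
    have hfun := one_add_mul_sum_mul_pow_mul hQ (-q ^ (n + 1)) (n + 1)
    have hQn := hQ n
    have hsq : (-1) ^ (n + 1) * q ^ (n + 1) ^ 2 = (-q ^ (n + 1)) ^ (n + 1) := by
      rw [neg_pow (q ^ (n + 1)), ← pow_mul, sq]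
    have hmul : (-q ^ (n + 1 + 1)) ^ (n + 1) = q ^ (n + 1) * (-q ^ (n + 1)) ^ (n + 1) := by
      rw [← mul_pow, mul_neg, pow_succ' q (n + 1)]
    apply hq n
    simp only [mul_neg, ← pow_succ' q (n + 1), ← sub_eq_add_neg] at hfun ⊢
    rw [hfun, hmul]
    simp only [sum_range_succ, hsq]
    generalize q ^ (n + 1) = y at *
    linear_combination (1 + y) * ih +
      (2 * ∑ s ∈ range n, (-1) ^ (s + 1) * q ^ (s + 1) ^ 2 + 1 + (-y) ^ (n + 1)) * hQn

theorem pow_dvd_one_add_two_mul_sum_mul_sub_one (hq : ∀ s, IsLeftRegular (1 - q ^ (s + 1)))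
    (hQ₀ : Q 0 = 1) (hQ : ∀ s, (1 - q ^ (s + 1)) * Q (s + 1) = (1 + q ^ (s + 1)) * Q s) (n : ℕ) :
    q ^ (n + 1) ∣ (1 + 2 * ∑ s ∈ range n, (-1) ^ (s + 1) * q ^ (s + 1) ^ 2) * Q n - 1 := by
  rw [one_add_two_mul_sum_neg_one_pow_mul_pow_sq_mul hq hQ₀ hQ]
  generalize q ^ (n + 1) = y
  cases n with
  | zero => simp [hQ₀]
  | succ n =>
    obtain ⟨c, hc⟩ : y ∣ ∑ s ∈ range n, (-y) ^ (s + 1) * Q (s + 1) :=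
      dvd_sum fun s _ ↦ ((dvd_neg.2 dvd_rfl).pow s.succ_ne_zero).mul_right _
    rw [sum_range_succ', hc, hQ₀]
    exact ⟨(1 - y) * c - 1 - (-y) ^ n * Q (n + 1), by ring⟩

end FiniteGaussIdentity

section OverpartitionSeries

theorem hasProd_powerSeriesMk_card_restricted_inter_distincts (R : Type*) [CommSemiring R]
    [TopologicalSpace R] [T2Space R] (p : ℕ → Prop) [DecidablePred p] :
    HasProd (fun i ↦ if p (i + 1) then (1 + X ^ (i + 1) : R⟦X⟧) else 1)
      (mk fun n ↦ (#(restricted n p ∩ distincts n) : R)) := by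
  convert! hasProd_genFun (fun i c ↦ if p i ∧ c < 2 then (1 : R) else 0) using 1
  · ext1 i
    rw [tsum_eq_single 0 fun j hj ↦ by simp [hj]]
    by_cases h : p (i + 1) <;> simp [h]
  · simp_rw [genFun, ← countRestricted_two, restricted, countRestricted, ← filter_and, card_filter,
      Finsupp.prod, prod_boole]
    simp [forall_and]

/-- The generating function `(1 + Xⁱ) / (1 - Xⁱ)` of the overpartitions all of whose parts are
equal to `i`, for `i ≠ 0`. -/
noncomputable def overpartitionFactor (i : ℕ) : ℤ⟦X⟧ :=
  (∑' j : ℕ, X ^ (i * j)) * (1 + X ^ i)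

/-- The generating function of the overpartitions all of whose parts satisfy `p`: the first factor
counts the non-overlined parts, the second one the overlined parts. -/
noncomputable def overpartitionSeries (p : ℕ → Prop) [DecidablePred p] : ℤ⟦X⟧ :=
  (mk fun n ↦ (#(restricted n p) : ℤ)) * mk fun n ↦ (#(restricted n p ∩ distincts n) : ℤ)

theorem coeff_overpartitionSeries_eq_Rbar (ℓ μ n : ℕ) :
    coeff n (overpartitionSeries fun i ↦ ¬ ℓ ∣ i ∧ ¬ μ ∣ i) = Rbar ℓ μ n := by
  simp [overpartitionSeries, coeff_mul, Rbar, regularCount, regularDistinctCount, restricted,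
    distincts, ← filter_and, Fintype.card_subtype, and_comm]

theorem one_sub_X_pow_mul_overpartitionFactor {i : ℕ} (hi : i ≠ 0) :
    (1 - X ^ i) * overpartitionFactor i = 1 + X ^ i := by
  have hgeom := one_sub_mul_tsum_pow_of_constantCoeff_eq_zero (f := (X ^ i : ℤ⟦X⟧)) (by simp [hi])
  simp only [overpartitionFactor, pow_mul, ← mul_assoc, hgeom, one_mul]

theorem hasProd_overpartitionSeries (p : ℕ → Prop) [DecidablePred p] :
    HasProd (fun i ↦ if p (i + 1) then overpartitionFactor (i + 1) else 1)
      (overpartitionSeries p) := by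
  convert! (hasProd_powerSeriesMk_card_restricted ℤ p).mul
    (hasProd_powerSeriesMk_card_restricted_inter_distincts ℤ p) using 2 with i
  split_ifs <;> simp [overpartitionFactor]

theorem overpartitionSeries_mul (p q : ℕ → Prop) [DecidablePred p] [DecidablePred q] :
    overpartitionSeries p * overpartitionSeries q =
      overpartitionSeries (fun i ↦ p i ∧ q i) * overpartitionSeries fun i ↦ p i ∨ q i := by
  refine ((hasProd_overpartitionSeries p).mul (hasProd_overpartitionSeries q)).unique ?_
  convert! (hasProd_overpartitionSeries fun i ↦ p i ∧ q i).mul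
    (hasProd_overpartitionSeries fun i ↦ p i ∨ q i) using 2 with i
  by_cases hp : p (i + 1) <;> by_cases hq : q (i + 1) <;> simp [hp, hq]

theorem overpartitionSeries_not_dvd_and_not_dvd_mul (ℓ μ : ℕ) :
    overpartitionSeries (fun i ↦ ¬ ℓ ∣ i ∧ ¬ μ ∣ i) *
        (overpartitionSeries (ℓ ∣ ·) * overpartitionSeries (μ ∣ ·)) =
      overpartitionSeries (1 ∣ ·) * overpartitionSeries (ℓ.lcm μ ∣ ·) := by
  have hcompl : overpartitionSeries (fun i ↦ ¬ ℓ ∣ i ∧ ¬ μ ∣ i) *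
      overpartitionSeries (fun i ↦ ℓ ∣ i ∨ μ ∣ i) = overpartitionSeries (1 ∣ ·) := by
    refine ((hasProd_overpartitionSeries _).mul (hasProd_overpartitionSeries _)).unique ?_
    convert! hasProd_overpartitionSeries (1 ∣ ·) using 2 with i
    by_cases hℓ : ℓ ∣ i + 1 <;> by_cases hμ : μ ∣ i + 1 <;> simp [hℓ, hμ]
  have hlcm : overpartitionSeries (fun i ↦ ℓ ∣ i ∧ μ ∣ i) = overpartitionSeries (ℓ.lcm μ ∣ ·) := by
    congr! 2 with i
    exact Nat.lcm_dvd_iff.symm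
  rw [overpartitionSeries_mul, hlcm, mul_left_comm, hcompl, mul_comm]

theorem hasProd_overpartitionSeries_dvd {k : ℕ} (hk : k ≠ 0) :
    HasProd (fun j ↦ overpartitionFactor (k * (j + 1))) (overpartitionSeries (k ∣ ·)) := by
  have hpos (j : ℕ) : 0 < k * (j + 1) := by positivity
  have hinj : Function.Injective fun j ↦ k * (j + 1) - 1 := fun i j hij ↦ by
    have : k * (i + 1) = k * (j + 1) := by have := hpos i; have := hpos j; grind
    simpa [hk] using this
  convert! (hinj.hasProd_iff ?_).2 (hasProd_overpartitionSeries (k ∣ ·)) using 2 with j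
  · simp [Nat.sub_add_cancel (hpos j)]
  · intro i hi
    refine if_neg fun ⟨c, hc⟩ ↦ hi ⟨c - 1, ?_⟩
    have : c ≠ 0 := by rintro rfl; simp at hc
    simp [Nat.sub_add_cancel (Nat.pos_of_ne_zero this), ← hc]

end OverpartitionSeries

section Theta

/-- The series `∑ (-1)ˢ X^(k s²)` over `s ≥ 1`, for `k ≠ 0`. In terms of Ramanujan's theta function
`φ`, the series `φ(-Xᵏ)` is `1 + 2 * alternatingSquareSeries k`. -/
noncomputable def alternatingSquareSeries (k : ℕ) : ℤ⟦X⟧ :=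
  ∑' s : ℕ, (-1) ^ (s + 1) * X ^ (k * (s + 1) ^ 2)

theorem coeff_neg_one_pow_mul_X_pow (s e n : ℕ) :
    coeff n ((-1) ^ s * X ^ e : ℤ⟦X⟧) = if n = e then (-1) ^ s else 0 := by
  simpa using coeff_C_mul_X_pow ((-1) ^ s : ℤ) e n

theorem hasSum_alternatingSquareSeries {k : ℕ} (hk : k ≠ 0) :
    HasSum (fun s : ℕ ↦ (-1) ^ (s + 1) * X ^ (k * (s + 1) ^ 2)) (alternatingSquareSeries k) := by
  refine ((summable_iff_summable_coeff ℤ).2 fun n ↦ summable_of_hasFiniteSupport ?_).hasSum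
  refine (Set.finite_Iic n).subset fun s hs ↦ ?_
  have hn : n = k * (s + 1) ^ 2 := by simpa [coeff_neg_one_pow_mul_X_pow] using hs
  have : 0 < k := Nat.pos_of_ne_zero hk
  simp only [Set.mem_Iic]
  nlinarith

theorem one_add_two_mul_alternatingSquareSeries_mul {k : ℕ} (hk : k ≠ 0) :
    (1 + 2 * alternatingSquareSeries k) * overpartitionSeries (k ∣ ·) = 1 := by
  have hsum := (hasSum_alternatingSquareSeries hk).tendsto_sum_nat
  have hprod := (hasProd_overpartitionSeries_dvd hk).tendsto_prod_nat
  refine tendsto_nhds_unique (((hsum.const_mul 2).const_add 1).mul hprod) ?_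
  refine (tendsto_iff_coeff_tendsto ℤ _ _ _).2 fun d ↦
    tendsto_atTop_of_eventually_const (i₀ := d) fun n hn ↦ ?_
  have hne (s : ℕ) : k * (s + 1) ≠ 0 := by positivity
  have hdvd := pow_dvd_one_add_two_mul_sum_mul_sub_one (q := (X ^ k : ℤ⟦X⟧))
    (Q := fun n ↦ ∏ j ∈ range n, overpartitionFactor (k * (j + 1))) (fun s ↦ ?_) (by simp)
    (fun s ↦ ?_) n
  · simp only [← pow_mul] at hdvd
    rw [← sub_eq_zero, ← map_sub]
    refine X_pow_dvd_iff.1 hdvd d ?_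
    have : 0 < k := Nat.pos_of_ne_zero hk
    nlinarith
  · exact (isUnit_iff_constantCoeff.2 (by simp [hk])).isRegular.left
  · rw [← pow_mul, prod_range_succ, mul_left_comm, one_sub_X_pow_mul_overpartitionFactor (hne s)]
    exact mul_comm _ _

theorem overpartitionSeries_not_dvd_and_not_dvd_mul_theta {ℓ μ : ℕ} (hℓ : ℓ ≠ 0) (hμ : μ ≠ 0) :
    overpartitionSeries (fun i ↦ ¬ ℓ ∣ i ∧ ¬ μ ∣ i) *
        ((1 + 2 * alternatingSquareSeries 1) * (1 + 2 * alternatingSquareSeries (ℓ.lcm μ))) =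
      (1 + 2 * alternatingSquareSeries ℓ) * (1 + 2 * alternatingSquareSeries μ) := by
  let G := overpartitionSeries fun i ↦ ¬ ℓ ∣ i ∧ ¬ μ ∣ i
  let P (k : ℕ) := overpartitionSeries (k ∣ ·)
  let T (k : ℕ) := 1 + 2 * alternatingSquareSeries k
  have hGP : G * (P ℓ * P μ) = P 1 * P (ℓ.lcm μ) := overpartitionSeries_not_dvd_and_not_dvd_mul ℓ μ
  have hTP {k : ℕ} (hk : k ≠ 0) : T k * P k = 1 := one_add_two_mul_alternatingSquareSeries_mul hk
  calc G * (T 1 * T (ℓ.lcm μ))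
    _ = G * (T 1 * T (ℓ.lcm μ)) * ((T ℓ * P ℓ) * (T μ * P μ)) := by simp [hTP, hℓ, hμ]
    _ = G * (P ℓ * P μ) * (T 1 * T (ℓ.lcm μ)) * (T ℓ * T μ) := by ring
    _ = (T 1 * P 1) * (T (ℓ.lcm μ) * P (ℓ.lcm μ)) * (T ℓ * T μ) := by rw [hGP]; ring
    _ = T ℓ * T μ := by simp [hTP, Nat.lcm_ne_zero hℓ hμ]

theorem coeff_alternatingSquareSeries {k : ℕ} (hk : k ≠ 0) (n : ℕ) :
    coeff n (alternatingSquareSeries k) =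
      ∑' s : ℕ, if n = k * (s + 1) ^ 2 then (-1) ^ (s + 1) else 0 := by
  simp only [← coeff_neg_one_pow_mul_X_pow]
  exact ((hasSum_iff_hasSum_coeff ℤ).1 (hasSum_alternatingSquareSeries hk) n).tsum_eq.symm

theorem exists_eq_mul_sq_of_coeff_alternatingSquareSeries_ne_zero {k n : ℕ} (hk : k ≠ 0)
    (hn : coeff n (alternatingSquareSeries k) ≠ 0) : ∃ a, n = k * a ^ 2 := by
  contrapose! hn
  simp [coeff_alternatingSquareSeries hk, hn]

theorem coeff_alternatingSquareSeries_one_modEq {n : ℕ} (hn : n ≠ 0) :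
    coeff n (alternatingSquareSeries 1) ≡ if IsSquare n then 1 else 0 [ZMOD 2] := by
  rw [coeff_alternatingSquareSeries one_ne_zero]
  split_ifs with h
  · obtain ⟨a, rfl⟩ := h
    obtain ⟨s, rfl⟩ := Nat.exists_eq_succ_of_ne_zero (left_ne_zero_of_mul hn)
    rw [tsum_eq_single s fun t ht ↦ if_neg ?_, if_pos (by rw [one_mul, sq])]
    · exact Int.odd_iff.1 (Odd.pow (by decide))
    · rw [one_mul, ← sq, Nat.succ_eq_add_one]
      intro hst
      exact ht (by simpa using hst.symm)
  · have hsq (s : ℕ) : n ≠ 1 * (s + 1) ^ 2 := fun hs ↦ h ⟨s + 1, by rw [hs]; ring⟩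
    simp only [hsq, if_false, tsum_zero, Int.ModEq.refl]

theorem mul_sq_mod_four_eq_zero_or (k a : ℕ) : k * a ^ 2 % 4 = 0 ∨ k * a ^ 2 % 4 = k % 4 := by
  rcases Nat.even_or_odd' a with ⟨r, rfl | rfl⟩
  · exact .inl (Nat.mod_eq_zero_of_dvd ⟨k * r ^ 2, by ring⟩)
  · refine .inr ?_
    rw [show k * (2 * r + 1) ^ 2 = k + 4 * (k * (r ^ 2 + r)) by ring, Nat.add_mul_mod_self_left]

theorem coeff_alternatingSquareSeries_eq_zero {k n : ℕ} (hk : k ≠ 0) (hk₂ : k % 4 ≠ 2)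
    (hn : n % 4 = 2) : coeff n (alternatingSquareSeries k) = 0 := by
  by_contra h
  obtain ⟨a, rfl⟩ := exists_eq_mul_sq_of_coeff_alternatingSquareSeries_ne_zero hk h
  have := mul_sq_mod_four_eq_zero_or k a
  omega

theorem coeff_alternatingSquareSeries_mul_eq_zero {k l n : ℕ} (hk : k ≠ 0) (hl : l ≠ 0)
    (hk₂ : k % 4 ≠ 2) (hl₂ : l % 4 ≠ 2) (hkl : (k + l) % 4 ≠ 2) (hn : n % 4 = 2) :
    coeff n (alternatingSquareSeries k * alternatingSquareSeries l) = 0 := by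
  rw [coeff_mul]
  refine sum_eq_zero fun ⟨i, j⟩ hij ↦ ?_
  by_contra h
  obtain ⟨a, rfl⟩ :=
    exists_eq_mul_sq_of_coeff_alternatingSquareSeries_ne_zero hk (left_ne_zero_of_mul h)
  obtain ⟨b, rfl⟩ :=
    exists_eq_mul_sq_of_coeff_alternatingSquareSeries_ne_zero hl (right_ne_zero_of_mul h)
  have := mul_sq_mod_four_eq_zero_or k a
  have := mul_sq_mod_four_eq_zero_or l b
  have := mem_antidiagonal.1 hij
  omega

end Theta

section Congruences

theorem coeff_mul_pow_modEq (p : ℕ) [hp : Fact p.Prime] (f : ℤ⟦X⟧) (n : ℕ) :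
    coeff (p * n) (f ^ p) ≡ coeff n f [ZMOD p] := by
  let g := f.map (Int.castRingHom (ZMod p))
  have hfrob : expand p hp.out.ne_zero g = g ^ p := by
    have := MvPowerSeries.map_frobenius_expand p hp.out.ne_zero (f := g)
    simpa [expand, ZMod.frobenius_zmod] using this
  have := congrArg (coeff (p * n)) hfrob
  rw [coeff_expand_mul, ← map_pow, coeff_map, coeff_map] at this
  exact (ZMod.intCast_eq_intCast_iff _ _ _).1 this.symm

-- Since `(1 + 2 a) (1 - 2 a + 4 a²) = 1 + 8 a³`, the inverse of `1 + 2 a` modulo `8` is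
-- `1 - 2 a + 4 a²`.
theorem eight_dvd_sub_of_mul_eq {R : Type*} [CommRing R] {p a b c d : R}
    (h : p * ((1 + 2 * a) * (1 + 2 * b)) = (1 + 2 * c) * (1 + 2 * d)) :
    8 ∣ p - (1 + 2 * (c + d - a - b) +
      4 * (a ^ 2 + (b * b + a * b + c * d - a * c - a * d - b * c - b * d))) := by
  refine ⟨(c + d) * (a ^ 2 + a * b + b ^ 2) - c * d * (a + b) +
    2 * c * d * (a ^ 2 + a * b + b ^ 2) + (1 + 2 * c) * (1 + 2 * d) * (2 * a * b - a - b) * a * b -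
    p * (a ^ 3 + b ^ 3 + 8 * a ^ 3 * b ^ 3), ?_⟩
  linear_combination (1 - 2 * a + 4 * a ^ 2) * (1 - 2 * b + 4 * b ^ 2) * h

theorem Rbar_modEq_four_mul_coeff_sq {ℓ μ n : ℕ} (hℓ : ℓ ≠ 0) (hμ : μ ≠ 0) (hℓ₄ : 4 ∣ ℓ)
    (hμ₄ : μ % 4 = 0 ∨ μ % 4 = 3) (hn : n % 4 = 2) :
    (Rbar ℓ μ n : ℤ) ≡ 4 * coeff n (alternatingSquareSeries 1 ^ 2) [ZMOD 8] := by
  have hℓ₄' : ℓ % 4 = 0 := Nat.mod_eq_zero_of_dvd hℓ₄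
  have hL := Nat.lcm_ne_zero hℓ hμ
  have hL₄ : ℓ.lcm μ % 4 = 0 := Nat.mod_eq_zero_of_dvd (hℓ₄.trans (Nat.dvd_lcm_left ℓ μ))
  have hn₀ : n ≠ 0 := by rintro rfl; simp at hn
  let S := alternatingSquareSeries
  have hlin : coeff n (S ℓ + S μ - S 1 - S (ℓ.lcm μ)) = 0 := by
    rcases hμ₄ with hμ₄ | hμ₄ <;>
      simp [S, coeff_alternatingSquareSeries_eq_zero, hℓ, hμ, hL, hℓ₄', hL₄, hμ₄, hn]
  have hquad : coeff n (S (ℓ.lcm μ) * S (ℓ.lcm μ) + S 1 * S (ℓ.lcm μ) + S ℓ * S μ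
      - S 1 * S ℓ - S 1 * S μ - S (ℓ.lcm μ) * S ℓ - S (ℓ.lcm μ) * S μ) = 0 := by
    rcases hμ₄ with hμ₄ | hμ₄ <;>
      simp [S, coeff_alternatingSquareSeries_mul_eq_zero, hℓ, hμ, hL, hℓ₄', hL₄, hμ₄, hn,
        Nat.add_mod]
  obtain ⟨z, hz⟩ :=
    eight_dvd_sub_of_mul_eq (overpartitionSeries_not_dvd_and_not_dvd_mul_theta hℓ hμ)
  have hcoeff := congrArg (coeff n) hz
  simp only [← map_ofNat (C (R := ℤ)), coeff_C_mul, map_add, map_sub, coeff_one, hn₀, if_false,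
    coeff_overpartitionSeries_eq_Rbar] at hcoeff
  simp only [S, map_add, map_sub] at hlin hquad
  exact (Int.modEq_iff_dvd.2
    ⟨coeff n z, by linear_combination hcoeff + 2 * hlin + 4 * hquad⟩).symm

end Congruences

theorem Rbar_four_three_odd_square_general {ℓ μ n : ℕ} (hℓ : ℓ ≠ 0) (hμ : μ ≠ 0) (hℓ₄ : 4 ∣ ℓ)
    (hμ₄ : μ % 4 = 0 ∨ μ % 4 = 3) (hn : Odd n) :
    Rbar ℓ μ (2 * n) ≡ if IsSquare n then 4 else 0 [MOD 8] := by
  rw [← Int.natCast_modEq_iff]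
  calc (Rbar ℓ μ (2 * n) : ℤ)
    _ ≡ 4 * coeff (2 * n) (alternatingSquareSeries 1 ^ 2) [ZMOD 8] :=
      Rbar_modEq_four_mul_coeff_sq hℓ hμ hℓ₄ hμ₄ (by grind)
    _ ≡ 4 * (if IsSquare n then 1 else 0) [ZMOD 8] :=
      ((coeff_mul_pow_modEq 2 _ n).trans
        (coeff_alternatingSquareSeries_one_modEq hn.pos.ne')).mul_left'
    _ = _ := by split_ifs <;> simp

theorem Rbar_four_three_odd_square (n : ℕ) (hn : 1 ≤ n)
    (h : ∃ m : ℕ, Odd m ∧ 0 < m ∧ n = m ^ 2) :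
    Rbar 4 3 (2 * n) ≡ 4 [MOD 8] := by
  obtain ⟨m, hm, -, rfl⟩ := h
  have hgen := Rbar_four_three_odd_square_general four_ne_zero three_ne_zero dvd_rfl (.inr rfl)
    (hm.pow (n := 2))
  rwa [if_pos (IsSquare.sq m)] at hgen
end

section
/- For all integers n ≥ 1, the number of (4,9)-regular overpartitions satisfies R̄_{4,9}(3n) ≡ 0 (mod 8). -/
/-!
By Gauss's identity `φ(-q) = ∏ (1 - q^i) / (1 + q^i)`, for coprime `ℓ` and `μ` the generating
function of `Rbar ℓ μ` is `φ(-q^ℓ) φ(-q^μ) / (φ(-q) φ(-q^{ℓμ}))`. Splitting squares by their residue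
modulo `3` gives the dissection `φ(-q) = φ(-q^9) - 2 q Ω(-q^3)`. When `μ = 9` and `ℓ ≡ 1 (mod 3)`,
applying it to `φ(-q)` and `φ(-q^ℓ)` turns the generating function into `(1 - 2 y) / (1 - 2 x)`,
where all exponents in `x` and `y` are `1` modulo `3`. Modulo `8` this quotient is
`1 + 2 (x - y) + 4 x (x - y)`, in which no positive exponent is divisible by `3`.
-/

namespace RegularOverpartition

open Finset PowerSeries Filter Topology
open scoped PowerSeries.WithPiTopology

section FiniteIdentity

variable {A : Type*} [CommRing A]

/-- The `s`-th summand of Shanks' finite form of Gauss's identity,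
`(-1)^s (-1; q)_s ((q; q)_n / (q; q)_s) q^{s (n + 1)}`, the quotient being written as a product. -/
def shanksTerm (q : A) (n s : ℕ) : A :=
  (-1) ^ s * (∏ i ∈ range s, (1 + q ^ i)) * (∏ i ∈ Ico s n, (1 - q ^ (i + 1))) * q ^ (s * (n + 1))

theorem shanksTerm_succ_left (q : A) {n s : ℕ} (h : s ≤ n) :
    shanksTerm q (n + 1) s = (1 - q ^ (n + 1)) * q ^ s * shanksTerm q n s := by
  rw [shanksTerm, shanksTerm, prod_Ico_succ_top h]
  ring

theorem one_sub_pow_mul_shanksTerm_succ_right (q : A) {n s : ℕ} (h : s < n) :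
    (1 - q ^ (s + 1)) * shanksTerm q n (s + 1) =
      -((1 + q ^ s) * q ^ (n + 1) * shanksTerm q n s) := by
  rw [shanksTerm, shanksTerm, prod_range_succ, prod_eq_prod_Ico_succ_bot h]
  ring

theorem shanksTerm_self (q : A) (n : ℕ) :
    shanksTerm q n n = (-1) ^ n * (∏ i ∈ range n, (1 + q ^ i)) * q ^ (n * (n + 1)) := by
  simp only [shanksTerm, Ico_self, prod_empty, mul_one]

theorem prod_range_succ_one_add_pow (q : A) (n : ℕ) :
    ∏ i ∈ range (n + 1), (1 + q ^ i) = 2 * ∏ i ∈ range n, (1 + q ^ (i + 1)) := by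
  rw [prod_range_succ', pow_zero, one_add_one_eq_two, mul_comm]

theorem sum_one_sub_pow_mul_shanksTerm (q : A) (n : ℕ) :
    ∑ s ∈ range (n + 1), (1 - q ^ s) * shanksTerm q n s =
      -∑ s ∈ range n, (1 + q ^ s) * q ^ (n + 1) * shanksTerm q n s := by
  rw [sum_range_succ', pow_zero, sub_self, zero_mul, add_zero, ← sum_neg_distrib]
  exact sum_congr rfl fun s hs ↦ one_sub_pow_mul_shanksTerm_succ_right q (mem_range.mp hs)

theorem sum_shanksTerm_succ (q : A) (n : ℕ) :
    ∑ s ∈ range (n + 2), shanksTerm q (n + 1) s =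
      (1 + q ^ (n + 1)) * ∑ s ∈ range (n + 1), shanksTerm q n s +
        2 * (-q) ^ ((n + 1) ^ 2) * ∏ i ∈ range (n + 1), (1 + q ^ (i + 1)) := by
  -- The coefficients agree as `(1 + q^(n+1)) - (1 - q^s) - (1 + q^s) q^(n+1) = (1 - q^(n+1)) q^s`;
  -- the two subtracted sums then cancel up to the last term.
  have sum_succ_left : ∑ s ∈ range (n + 1), shanksTerm q (n + 1) s =
      (1 + q ^ (n + 1)) * ∑ s ∈ range (n + 1), shanksTerm q n s -
        ∑ s ∈ range (n + 1), (1 - q ^ s) * shanksTerm q n s -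
        ∑ s ∈ range (n + 1), (1 + q ^ s) * q ^ (n + 1) * shanksTerm q n s := by
    rw [mul_sum, ← sum_sub_distrib, ← sum_sub_distrib]
    refine sum_congr rfl fun s hs ↦ ?_
    rw [shanksTerm_succ_left q (mem_range_succ_iff.mp hs)]
    ring
  have neg_pow_sq : (-q) ^ ((n + 1) ^ 2) = (-1) ^ (n + 1) * q ^ ((n + 1) ^ 2) := by
    rw [neg_pow, neg_one_pow_congr (Nat.even_pow' two_ne_zero)]
  rw [sum_range_succ, sum_succ_left, sum_one_sub_pow_mul_shanksTerm,
    sum_range_succ (fun s ↦ (1 + q ^ s) * q ^ (n + 1) * shanksTerm q n s), shanksTerm_self,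
    shanksTerm_self, prod_range_succ_one_add_pow, prod_range_succ, neg_pow_sq]
  have last := prod_range_succ_one_add_pow q n
  rw [prod_range_succ] at last
  linear_combination -(-1) ^ n * q ^ ((n + 1) * (n + 1)) * last

theorem prod_one_add_pow_mul_sum_neg_pow_sq (q : A) (n : ℕ) :
    (∏ i ∈ range n, (1 + q ^ (i + 1))) * (1 + 2 * ∑ k ∈ range n, (-q) ^ ((k + 1) ^ 2)) =
      ∑ s ∈ range (n + 1), shanksTerm q n s := by
  induction n with
  | zero => simp [shanksTerm]
  | succ n ih =>
    rw [sum_shanksTerm_succ, ← ih, sum_range_succ, prod_range_succ]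
    ring

theorem pow_dvd_prod_one_add_pow_mul_sub_prod_one_sub_pow (q : A) (n : ℕ) :
    q ^ (n + 1) ∣
      (∏ i ∈ range n, (1 + q ^ (i + 1))) * (1 + 2 * ∑ k ∈ range n, (-q) ^ ((k + 1) ^ 2)) -
        ∏ i ∈ range n, (1 - q ^ (i + 1)) := by
  rw [prod_one_add_pow_mul_sum_neg_pow_sq, sum_range_succ',
    show shanksTerm q n 0 = ∏ i ∈ range n, (1 - q ^ (i + 1)) by simp [shanksTerm],
    add_sub_cancel_right]
  exact dvd_sum fun s _ ↦ (pow_dvd_pow q (Nat.le_mul_of_pos_left _ s.succ_pos)).mul_left _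

end FiniteIdentity

section Theta

variable (R : Type*) [CommRing R]

/-- Ramanujan's theta function `φ(-q) = ∑_{k ∈ ℤ} (-1)^k q^{k²}`. The sign of `q^d`, where `d = k²`,
is written `(-1)^d`, as `k` and `k²` have the same parity. -/
def theta : R⟦X⟧ :=
  .mk fun d ↦ if d = 0 then 1 else if IsSquare d then 2 * (-1) ^ d else 0

/-- `Ω(-q) = ∑_{k ∈ ℤ} (-1)^k q^{3k² - 2k}`, the series in the `3`-dissection of `theta`. Its
exponents are the `j` with `3 j + 1 = (3 k - 1)²` a square. -/
def omega : R⟦X⟧ :=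
  .mk fun j ↦ if IsSquare (3 * j + 1) then (-1) ^ j else 0

theorem isSquare_sq_mul_iff {k n : ℕ} (hk : k ≠ 0) : IsSquare (k ^ 2 * n) ↔ IsSquare n := by
  refine ⟨?_, (IsSquare.sq k).mul⟩
  rintro ⟨r, hr⟩
  obtain ⟨m, rfl⟩ : k ∣ r := (Nat.pow_dvd_pow_iff two_ne_zero).mp ⟨n, by rw [sq r, hr]⟩
  exact ⟨m, mul_left_cancel₀ (pow_ne_zero 2 hk) (by rw [hr]; ring)⟩

theorem sq_dvd_of_isSquare {p d : ℕ} (hp : p.Prime) (h : IsSquare d) (hd : p ∣ d) :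
    p ^ 2 ∣ d := by
  obtain ⟨r, rfl⟩ := h
  rw [← sq] at hd ⊢
  exact pow_dvd_pow_of_dvd (hp.dvd_of_dvd_pow hd) 2

theorem mod_three_of_isSquare {d : ℕ} (h : IsSquare d) : d % 3 = 0 ∨ d % 3 = 1 := by
  obtain ⟨r, rfl⟩ := h
  have : r % 3 < 3 := Nat.mod_lt _ three_pos
  rw [Nat.mul_mod]
  interval_cases r % 3 <;> simp

theorem coeff_expand_nine_theta (d : ℕ) :
    coeff d (expand 9 (by norm_num) (theta R)) = if 3 ∣ d then coeff d (theta R) else 0 := by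
  by_cases h9 : 9 ∣ d
  · obtain ⟨e, rfl⟩ := h9
    have h3 : 3 ∣ 9 * e := ⟨3 * e, by ring⟩
    have parity : (-1 : R) ^ (9 * e) = (-1) ^ e :=
      neg_one_pow_congr (by simp [Nat.even_mul, show ¬Even 9 by decide])
    have isSquare_iff : IsSquare (9 * e) ↔ IsSquare e := isSquare_sq_mul_iff three_ne_zero
    simp [theta, h3, isSquare_iff, parity]
  · rw [coeff_expand_of_not_dvd _ _ _ h9, theta, coeff_mk]
    have not_isSquare (h3 : 3 ∣ d) : ¬IsSquare d :=
      fun h ↦ h9 (sq_dvd_of_isSquare Nat.prime_three h h3)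
    grind

theorem coeff_X_mul_expand_three_omega (d : ℕ) :
    coeff d (X * expand 3 (by norm_num) (omega R)) =
      if ¬3 ∣ d ∧ IsSquare d then -(-1) ^ d else 0 := by
  rcases d with _ | d
  · simp
  rw [coeff_succ_X_mul]
  by_cases h3 : 3 ∣ d
  · obtain ⟨j, rfl⟩ := h3
    have parity : (-1 : R) ^ j = (-1) ^ (3 * j) :=
      neg_one_pow_congr (by simp [Nat.even_mul, show ¬Even 3 by decide])
    have not_dvd : ¬3 ∣ 3 * j + 1 := by omega
    simp [omega, parity, pow_succ, not_dvd]
  · rw [coeff_expand_of_not_dvd _ _ _ h3, if_neg]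
    grind [mod_three_of_isSquare]

theorem theta_eq_expand_nine_theta_sub :
    theta R = expand 9 (by norm_num) (theta R) - 2 * (X * expand 3 (by norm_num) (omega R)) := by
  ext d
  rw [two_mul, map_sub, map_add, coeff_expand_nine_theta, coeff_X_mul_expand_three_omega, theta,
    coeff_mk]
  grind

theorem coeff_sum_neg_X_pow_sq {d n : ℕ} (h : d ≤ n) :
    coeff d (∑ k ∈ range n, (-X : R⟦X⟧) ^ ((k + 1) ^ 2)) =
      if d ≠ 0 ∧ IsSquare d then (-1) ^ d else 0 := by
  have coeff_neg_X_pow (m : ℕ) : coeff d ((-X : R⟦X⟧) ^ m) = if d = m then (-1) ^ d else 0 := by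
    rw [neg_pow, ← map_one C, ← map_neg, ← map_pow, coeff_C_mul, coeff_X_pow]
    grind
  simp only [map_sum, coeff_neg_X_pow]
  split_ifs with hd
  · obtain ⟨hd0, r, rfl⟩ := hd
    have hr : 0 < r := Nat.pos_of_ne_zero fun h ↦ hd0 (by simp [h])
    rw [sum_eq_single (r - 1)]
    · rw [if_pos (by rw [Nat.sub_add_cancel hr, sq])]
    · intro k _ hk
      rw [if_neg]
      rw [← sq, Nat.pow_left_inj two_ne_zero]
      omega
    · rw [mem_range]
      intro hk
      nlinarith [Nat.sub_add_cancel hr]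
  · refine sum_eq_zero fun k _ ↦ if_neg ?_
    rintro rfl
    exact hd ⟨by simp, k + 1, sq _⟩

theorem X_pow_dvd_sum_neg_X_pow_sq_sub_theta (n : ℕ) :
    X ^ (n + 1) ∣ (1 + 2 * ∑ k ∈ range n, (-X : R⟦X⟧) ^ ((k + 1) ^ 2)) - theta R := by
  rw [X_pow_dvd_iff]
  intro d hd
  rw [two_mul, map_sub, map_add, map_add, coeff_sum_neg_X_pow_sq R (Nat.lt_succ_iff.mp hd),
    coeff_one, theta, coeff_mk]
  grind

end Theta

section Products

variable {R : Type*} [CommRing R] [TopologicalSpace R]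

theorem tendsto_of_X_pow_dvd_sub {f : ℕ → R⟦X⟧} {g : R⟦X⟧} (h : ∀ n, X ^ (n + 1) ∣ f n - g) :
    Tendsto f atTop (𝓝 g) := by
  rw [WithPiTopology.tendsto_iff_coeff_tendsto]
  refine fun d ↦ tendsto_atTop_of_eventually_const (i₀ := d) fun n hn ↦ ?_
  have := X_pow_dvd_iff.mp (h n) d (by omega)
  rwa [map_sub, sub_eq_zero] at this

theorem continuous_expand (m : ℕ) (hm : m ≠ 0) : Continuous (expand m hm : R⟦X⟧ → R⟦X⟧) := by
  refine continuous_iff_continuousAt.mpr fun f ↦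
    (WithPiTopology.tendsto_iff_coeff_tendsto _ _ _ _).mpr fun d ↦ ?_
  simp only [coeff_expand]
  split_ifs
  · exact (WithPiTopology.continuous_coeff R (d / m)).continuousAt
  · exact tendsto_const_nhds

/-- The infinite product `∏ (1 + c q^i)` over the `i ≥ 1` with `p i`. -/
noncomputable def restrictedProd (p : ℕ → Prop) [DecidablePred p] (c : R) : R⟦X⟧ :=
  ∏' i, if p (i + 1) then 1 + c • X ^ (i + 1) else 1

variable (p : ℕ → Prop) [DecidablePred p]

theorem multipliable_restrictedProd (c : R) :
    Multipliable fun i ↦ if p (i + 1) then 1 + c • X ^ (i + 1) else (1 : R⟦X⟧) := by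
  have tendsto_order : Tendsto
      (fun i ↦ (if p (i + 1) then c • X ^ (i + 1) else (0 : R⟦X⟧)).order) atTop (𝓝 ⊤) := by
    refine ENat.tendsto_nhds_top_iff_natCast_lt.mpr fun n ↦ eventually_atTop.mpr ⟨n, fun i hi ↦ ?_⟩
    refine (Nat.cast_lt.mpr (Nat.lt_succ_of_le hi)).trans_le (nat_le_order _ _ fun j hj ↦ ?_)
    split_ifs
    · rw [coeff_smul, coeff_X_pow, if_neg hj.ne, smul_zero]
    · exact map_zero _
  refine (WithPiTopology.multipliable_one_add_of_tendsto_order_atTop_nhds_top R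
    tendsto_order).congr fun i ↦ ?_
  split_ifs
  · rfl
  · exact add_zero 1

theorem tendsto_prod_restrictedProd_true (c : R) :
    Tendsto (fun n ↦ ∏ i ∈ range n, (1 + c • X ^ (i + 1) : R⟦X⟧)) atTop
      (𝓝 (restrictedProd (fun _ ↦ True) c)) := by
  simpa using! (multipliable_restrictedProd (fun _ ↦ True) c).hasProd.tendsto_prod_nat

variable [T2Space R]

theorem expand_restrictedProd_true (m : ℕ) (hm : m ≠ 0) (c : R) :
    expand m hm (restrictedProd (fun _ ↦ True) c) = restrictedProd (m ∣ ·) c := by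
  have index_eq (i : ℕ) : m * (i + 1) - 1 + 1 = m * (i + 1) :=
    Nat.sub_add_cancel (Nat.mul_pos (Nat.pos_of_ne_zero hm) i.succ_pos)
  have index_injective : Function.Injective fun i : ℕ ↦ m * (i + 1) - 1 := fun i j hij ↦ by
    have : m * (i + 1) = m * (j + 1) := by
      rw [← index_eq, ← index_eq j]
      exact congrArg (· + 1) hij
    simpa [hm] using this
  have support_subset : Function.mulSupport
      (fun j ↦ if m ∣ j + 1 then 1 + c • X ^ (j + 1) else (1 : R⟦X⟧)) ⊆
        Set.range fun i : ℕ ↦ m * (i + 1) - 1 := by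
    intro j hj
    have : m ∣ j + 1 := by
      by_contra h
      simp [h] at hj
    obtain ⟨_ | i, hi⟩ := this
    · simp at hi
    · exact ⟨i, by simp [← hi]⟩
  calc expand m hm (restrictedProd (fun _ ↦ True) c)
    _ = ∏' i, expand m hm (if True then 1 + c • X ^ (i + 1) else 1) :=
      (multipliable_restrictedProd (fun _ ↦ True) c).map_tprod _ (continuous_expand m hm)
    _ = ∏' i, if m ∣ m * (i + 1) - 1 + 1 then 1 + c • X ^ (m * (i + 1) - 1 + 1) else 1 :=
      tprod_congr fun i ↦ by simp [index_eq, pow_mul]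
    _ = restrictedProd (m ∣ ·) c := index_injective.tprod_eq support_subset

theorem powerSeriesMk_card_restricted_nodup :
    (PowerSeries.mk fun n ↦ (#{x : n.Partition | x.parts.Nodup ∧ ∀ i ∈ x.parts, p i} : R)) =
      restrictedProd p 1 := by
  have factor (i : ℕ) : (if p (i + 1) then 1 + (1 : R) • X ^ (i + 1) else 1) =
      1 + ∑' j, (if p (i + 1) ∧ j + 1 < 2 then (1 : R) else 0) •
        (X : R⟦X⟧) ^ ((i + 1) * (j + 1)) := by
    rw [tsum_eq_single 0 fun j hj ↦ by simp [hj]]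
    split_ifs <;> simp_all
  have nodup_and_iff {n : ℕ} (x : n.Partition) : (x.parts.Nodup ∧ ∀ i ∈ x.parts, p i) ↔
      ∀ i ∈ x.parts, p i ∧ x.parts.count i < 2 := by
    rw [Multiset.nodup_iff_count_le_one]
    grind [Multiset.count_eq_zero]
  simp_rw [restrictedProd, factor,
    ← Nat.Partition.genFun_eq_tprod fun i k ↦ if p i ∧ k < 2 then (1 : R) else 0,
    Nat.Partition.genFun, Finsupp.prod, prod_boole, card_filter, nodup_and_iff]
  simp

variable [IsTopologicalRing R]

theorem powerSeriesMk_card_restricted_mul_restrictedProd_neg_one :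
    (PowerSeries.mk fun n ↦ (#(Nat.Partition.restricted n p) : R)) * restrictedProd p (-1) = 1 := by
  rw [Nat.Partition.powerSeriesMk_card_restricted_eq_tprod, restrictedProd,
    ← (Nat.Partition.multipliable_powerSeriesMk_card_restricted R p).tprod_mul
      (multipliable_restrictedProd p (-1))]
  refine (tprod_congr fun i ↦ ?_).trans tprod_one
  split_ifs
  · simp_rw [pow_mul, neg_one_smul, ← sub_eq_add_neg]
    exact WithPiTopology.tsum_pow_mul_one_sub_of_constantCoeff_eq_zero (by simp)
  · exact one_mul 1

theorem restrictedProd_regular_mul {ℓ μ : ℕ} (h : ℓ.Coprime μ) (c : R) :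
    restrictedProd (fun i ↦ ¬ℓ ∣ i ∧ ¬μ ∣ i) c *
        (restrictedProd (ℓ ∣ ·) c * restrictedProd (μ ∣ ·) c) =
      restrictedProd (fun _ ↦ True) c * restrictedProd (ℓ * μ ∣ ·) c := by
  have hm (p : ℕ → Prop) [DecidablePred p] := multipliable_restrictedProd p c
  have dvd_iff (i : ℕ) : ℓ * μ ∣ i ↔ ℓ ∣ i ∧ μ ∣ i :=
    ⟨fun h' ↦ ⟨dvd_of_mul_right_dvd h', dvd_of_mul_left_dvd h'⟩,
      fun h' ↦ h.mul_dvd_of_dvd_of_dvd h'.1 h'.2⟩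
  simp only [restrictedProd]
  rw [← (hm (ℓ ∣ ·)).tprod_mul (hm (μ ∣ ·)),
    ← (hm fun i ↦ ¬ℓ ∣ i ∧ ¬μ ∣ i).tprod_mul ((hm (ℓ ∣ ·)).mul (hm (μ ∣ ·))),
    ← (hm fun _ ↦ True).tprod_mul (hm (ℓ * μ ∣ ·))]
  refine tprod_congr fun i ↦ ?_
  by_cases hℓ : ℓ ∣ i + 1 <;> by_cases hμ : μ ∣ i + 1 <;> simp [hℓ, hμ, dvd_iff]

theorem restrictedProd_true_one_mul_theta :
    restrictedProd (fun _ ↦ True) 1 * theta R = restrictedProd (fun _ ↦ True) (-1) := by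
  have tendsto_theta := tendsto_of_X_pow_dvd_sub (X_pow_dvd_sum_neg_X_pow_sq_sub_theta R)
  have tendsto_mul := (tendsto_prod_restrictedProd_true (1 : R)).mul tendsto_theta
  have tendsto_neg_one := tendsto_prod_restrictedProd_true (-1 : R)
  simp only [one_smul, neg_one_smul, ← sub_eq_add_neg] at tendsto_mul tendsto_neg_one
  refine sub_eq_zero.mp (tendsto_nhds_unique (tendsto_mul.sub tendsto_neg_one)
    (tendsto_of_X_pow_dvd_sub fun n ↦ ?_))
  rw [sub_zero]
  exact pow_dvd_prod_one_add_pow_mul_sub_prod_one_sub_pow X n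

theorem isUnit_restrictedProd_true_one : IsUnit (restrictedProd (fun _ ↦ True) (1 : R)) := by
  have := powerSeriesMk_card_restricted_mul_restrictedProd_neg_one (R := R) fun _ ↦ True
  rw [← restrictedProd_true_one_mul_theta, mul_left_comm] at this
  exact .of_mul_eq_one _ this

end Products

section GeneratingFunction

variable (R : Type*) [CommRing R]

theorem powerSeriesMk_Rbar (ℓ μ : ℕ) :
    (PowerSeries.mk fun n ↦ (Rbar ℓ μ n : R)) =
      (PowerSeries.mk fun n ↦ (#(Nat.Partition.restricted n fun i ↦ ¬ℓ ∣ i ∧ ¬μ ∣ i) : R)) *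
        PowerSeries.mk fun n ↦
          (#{x : n.Partition | x.parts.Nodup ∧ ∀ i ∈ x.parts, ¬ℓ ∣ i ∧ ¬μ ∣ i} : R) := by
  ext n
  simp [coeff_mul, Rbar, regularCount, regularDistinctCount, Fintype.card_subtype,
    Nat.Partition.restricted]

theorem powerSeriesMk_Rbar_mul_theta {ℓ μ : ℕ} (hℓ : ℓ ≠ 0) (hμ : μ ≠ 0) (h : ℓ.Coprime μ) :
    (PowerSeries.mk fun n ↦ (Rbar ℓ μ n : R)) * theta R *
        expand (ℓ * μ) (mul_ne_zero hℓ hμ) (theta R) =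
      expand ℓ hℓ (theta R) * expand μ hμ (theta R) := by
  let _ : TopologicalSpace R := ⊥
  have _ : DiscreteTopology R := ⟨rfl⟩
  set P : R → R⟦X⟧ := restrictedProd fun _ ↦ True with hP
  set Q : R → R⟦X⟧ := restrictedProd fun i ↦ ¬ℓ ∣ i ∧ ¬μ ∣ i
  have sieve (c : R) : Q c * (expand ℓ hℓ (P c) * expand μ hμ (P c)) =
      P c * expand (ℓ * μ) (mul_ne_zero hℓ hμ) (P c) := by
    simp only [hP, expand_restrictedProd_true]
    exact restrictedProd_regular_mul h c
  have overpartitions : (PowerSeries.mk fun n ↦ (Rbar ℓ μ n : R)) * Q (-1) = Q 1 := by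
    rw [powerSeriesMk_Rbar, powerSeriesMk_card_restricted_nodup, mul_right_comm,
      powerSeriesMk_card_restricted_mul_restrictedProd_neg_one, one_mul]
  have isUnit_P : IsUnit (P 1 * expand (ℓ * μ) (mul_ne_zero hℓ hμ) (P 1)) :=
    isUnit_restrictedProd_true_one.mul (isUnit_restrictedProd_true_one.map _)
  have gauss : P 1 * theta R = P (-1) := restrictedProd_true_one_mul_theta
  have sieve_neg_one := sieve (-1)
  simp only [← gauss, map_mul] at sieve_neg_one
  apply isUnit_P.mul_right_cancel
  linear_combination (-PowerSeries.mk fun n ↦ (Rbar ℓ μ n : R)) * sieve_neg_one +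
    expand ℓ hℓ (theta R) * expand μ hμ (theta R) *
      (sieve 1 + expand ℓ hℓ (P 1) * expand μ hμ (P 1) * overpartitions)

end GeneratingFunction

section ModEight

variable (R : Type*) [CommRing R]

theorem isUnit_theta : IsUnit (theta R) := by
  simp [isUnit_iff_constantCoeff, theta, ← coeff_zero_eq_constantCoeff_apply]

theorem exists_theta_eq_expand_nine_theta_mul :
    ∃ g : R⟦X⟧, theta R = expand 9 (by norm_num) (theta R) *
      (1 - 2 * (X * expand 3 (by norm_num) g)) := by
  obtain ⟨u, hu⟩ := (isUnit_theta R).exists_right_inv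
  have expand_nine_mul : expand 9 (by norm_num) (theta R) *
      expand 3 (by norm_num) (expand 3 (by norm_num) u) = 1 := by
    have expand_nine (f : R⟦X⟧) : expand 9 (by norm_num) f =
        expand 3 (by norm_num) (expand 3 (by norm_num) f) :=
      expand_mul 3 three_ne_zero 3 three_ne_zero f
    rw [← expand_nine, ← map_mul, hu, map_one]
  refine ⟨omega R * expand 3 (by norm_num) u, ?_⟩
  rw [map_mul]
  linear_combination theta_eq_expand_nine_theta_sub R +
    2 * (X * expand 3 (by norm_num) (omega R)) * expand_nine_mul

theorem exists_powerSeriesMk_Rbar_nine_mul {ℓ : ℕ} (hℓ : ℓ ≠ 0) (h : ℓ.Coprime 9) :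
    ∃ g h : R⟦X⟧, (PowerSeries.mk fun n ↦ (Rbar ℓ 9 n : R)) *
        (1 - 2 * (X * expand 3 (by norm_num) g)) =
      1 - 2 * (X ^ ℓ * expand 3 (by norm_num) h) := by
  obtain ⟨g, hg⟩ := exists_theta_eq_expand_nine_theta_mul R
  have expand_hg : expand ℓ hℓ (theta R) =
      expand (ℓ * 9) (mul_ne_zero hℓ (by norm_num)) (theta R) *
        (1 - 2 * (X ^ ℓ * expand 3 (by norm_num) (expand ℓ hℓ g))) := by
    have expand_comm : expand ℓ hℓ (expand 3 (by norm_num) g) =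
        expand 3 (by norm_num) (expand ℓ hℓ g) := by
      simp only [← expand_mul, mul_comm]
    have expand_nine := expand_mul ℓ hℓ 9 (by norm_num) (theta R)
    rw [← expand_comm, expand_nine]
    nth_rw 1 [hg]
    simp only [map_mul, map_sub, map_one, map_ofNat, expand_X]
  refine ⟨g, expand ℓ hℓ g, ?_⟩
  have isUnit_expand : IsUnit (expand 9 (by norm_num) (theta R) *
      expand (ℓ * 9) (mul_ne_zero hℓ (by norm_num)) (theta R)) :=
    ((isUnit_theta R).map _).mul ((isUnit_theta R).map _)
  apply isUnit_expand.mul_right_cancel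
  have generating := powerSeriesMk_Rbar_mul_theta R hℓ (by norm_num) h
  rw [expand_hg] at generating
  nth_rewrite 1 [hg] at generating
  linear_combination generating

theorem eq_of_mul_one_sub_two_mul_eq {A : Type*} [CommRing A] {F x y : A}
    (h : F * (1 - 2 * x) = 1 - 2 * y) :
    F = 1 + 2 • (x - y) + 4 • (x * (x - y)) + 8 • (x ^ 2 * (F * x - y)) := by
  simp only [nsmul_eq_mul, Nat.cast_ofNat]
  linear_combination (1 + 2 * x + 4 * x ^ 2) * h

variable {R}

theorem coeff_mul_X_pow_mul_expand_of_not_dvd {p : ℕ} (hp : p ≠ 0) (f : R⟦X⟧) {m : ℕ}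
    (hm : ¬p ∣ m) (n : ℕ) : coeff (p * n) (X ^ m * expand p hp f) = 0 := by
  rw [coeff_X_pow_mul']
  split_ifs with hle
  · exact coeff_expand_of_not_dvd _ _ _ fun h ↦
      hm ((Nat.dvd_sub_iff_right hle (dvd_mul_right p n)).mp h)
  · rfl

theorem eight_dvd_coeff_three_mul {F g h : R⟦X⟧} {ℓ n : ℕ} (hℓ : ℓ ≡ 1 [MOD 3]) (hn : n ≠ 0)
    (hF : F * (1 - 2 * (X * expand 3 (by norm_num) g)) =
      1 - 2 * (X ^ ℓ * expand 3 (by norm_num) h)) :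
    8 ∣ coeff (3 * n) F := by
  rw [Nat.ModEq] at hℓ
  set x := X * expand 3 (by norm_num) g with hx
  set y := X ^ ℓ * expand 3 (by norm_num) h with hy
  have coeff_x : coeff (3 * n) x = 0 := by
    rw [hx, ← pow_one X, coeff_mul_X_pow_mul_expand_of_not_dvd three_ne_zero g (by norm_num)]
  have coeff_y : coeff (3 * n) y = 0 :=
    coeff_mul_X_pow_mul_expand_of_not_dvd three_ne_zero h (by omega) n
  have coeff_x_mul_x : coeff (3 * n) (x * x) = 0 := by
    have : x * x = X ^ 2 * expand 3 (by norm_num) (g * g) := by rw [hx, map_mul]; ring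
    rw [this, coeff_mul_X_pow_mul_expand_of_not_dvd three_ne_zero _ (by norm_num)]
  have coeff_x_mul_y : coeff (3 * n) (x * y) = 0 := by
    have : x * y = X ^ (ℓ + 1) * expand 3 (by norm_num) (g * h) := by rw [hx, hy, map_mul]; ring
    rw [this, coeff_mul_X_pow_mul_expand_of_not_dvd three_ne_zero _ (by omega)]
  have coeff_one_eq_zero : coeff (3 * n) (1 : R⟦X⟧) = 0 := by
    rw [coeff_one, if_neg (by omega)]
  refine ⟨coeff (3 * n) (x ^ 2 * (F * x - y)), ?_⟩
  conv_lhs => rw [eq_of_mul_one_sub_two_mul_eq hF]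
  simp only [map_add, map_sub, map_nsmul, mul_sub x, coeff_one_eq_zero, coeff_x, coeff_y,
    coeff_x_mul_x, coeff_x_mul_y]
  simp

end ModEight

end RegularOverpartition

open RegularOverpartition in
theorem Rbar_four_nine_three_n_mod_eight_general (ℓ n : ℕ) (hℓ : ℓ ≡ 1 [MOD 3]) (hn : 1 ≤ n) :
    Rbar ℓ 9 (3 * n) ≡ 0 [MOD 8] := by
  have ne_zero : ℓ ≠ 0 := by rintro rfl; contradiction
  have coprime : ℓ.Coprime 9 := (show ℓ.Coprime 3 from hℓ.gcd_eq).pow_right 2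
  obtain ⟨g, h, hgh⟩ := exists_powerSeriesMk_Rbar_nine_mul ℤ ne_zero coprime
  have dvd := eight_dvd_coeff_three_mul hℓ (Nat.ne_of_gt hn) hgh
  rw [PowerSeries.coeff_mk] at dvd
  exact Nat.modEq_zero_iff_dvd.mpr (by exact_mod_cast dvd)

theorem Rbar_four_nine_three_n_mod_eight (n : ℕ) (hn : 1 ≤ n) :
    Rbar 4 9 (3 * n) ≡ 0 [MOD 8] :=
  Rbar_four_nine_three_n_mod_eight_general 4 n (by decide) hn
end
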